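/- Let c ∈ (0, c_crit), let c̄ ∈ (0, c] and set A := 2√2·m, B := c̄²·√m·min{1, (1 - 1/(3√2))/(8m^{3/2})}, δ := √(e·m·(c_crit² - c²)), and let C > 0 be any constant with (1-h²)² - h³ ≥ C for all h ∈ [-1,0]. If h : [0, s₁] → [-1, 0] solves the transformed Jang equation dh/ds = F_c(s, h(s)) with h(0) = 0 on an interval [0, s₁] ⊆ [0, 1/(3√2)], then h(s) ≤ (B·C/A)·log(δ/(A·s + δ)) for all s ∈ [0, s₁]. -/

import Mathlib

/-- The function `φ(r) = e^{r/(2m)-1}(r - 2m)` defining the Kruskal radius implicitly. -/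
noncomputable def phi (m r : ℝ) : ℝ := Real.exp (r / (2*m) - 1) * (r - 2*m)

/-- The derivative `φ_r(r) = (r/(2m)) e^{r/(2m)-1}`. -/
noncomputable def phiR (m r : ℝ) : ℝ := (r / (2*m)) * Real.exp (r / (2*m) - 1)

/-- The critical parameter `c_crit = √(8m/e)`. -/
noncomputable def cCrit (m : ℝ) : ℝ := Real.sqrt (8*m / Real.exp 1)

/-- The right-hand side of Jang's equation on the slice `L_c`:
`f''(u) = jangRHS m c u r (f'(u))` where `r = r(u)` solves `φ(r) = u(u+c)`. -/
noncomputable def jangRHS (m c u r p : ℝ) : ℝ :=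
  c * Real.sqrt (2*m / phiR m r + p^2/4) *
      ((1 / phiR m r) * (1/(2*m) - 3/r) - p^2/(2*m*r))
    - ((2*u + c)/(4*m*r)) * p^3
    - ((2*u + c)/(2 * phiR m r)) * (1/(2*m) + 5/r) * p

/-- The right-hand side `F_c(s,h)` of the transformed Jang equation,
with `r = r_c(s)` solving `φ(r) = (c²/4)(s²-1)`. -/
noncomputable def Fc (m c s r h : ℝ) : ℝ :=
  (c^2/2) * Real.sqrt (2*m*(1 - h^2) / phiR m r + h^2/4) *
      (((1 - h^2) / phiR m r) * (1/(2*m) - 3/r) - h^2/(2*m*r))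
    - (c^2*s/(8*m*r)) * h^3
    - (c^2*s/(4 * phiR m r)) * (1/(2*m) + 5/r) * (h*(1 - h^2))

/-!
Put `p = φ_r(r)`, `a = 1 - h²` and let `S` be the square root in `F_c`. As `r ≤ 2m`, expanding
`F_c` gives `F_c / c² ≤ -(a / (p r)) (S - (3/2) s |h|) - (h² / (4 m r)) (S - s |h| / 2)`. In
the first bracket `S ≥ √m a + |h| / (2√2)`, whose second summand absorbs `(3/2) s |h|` exactly when
`s ≤ 1/(3√2)`; in the second one `S ≥ |h| / 2`. With `p ≤ 1` this yields `F_c ≤ -B C / r`.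
On the other hand, `eˣ (1 - x) ≤ 1 - x² / 2` at `x = r / (2m)` turns the implicit equation for the
Kruskal radius into `r² ≤ 8 m² s² + δ²`, so `r ≤ A s + δ`. Hence `h' ≤ -B C / (A s + δ)`, and
the right-hand side is the derivative of the logarithmic barrier, which vanishes at `s = 0`.
-/

/-- The rate `A = 2√2 m` in the logarithmic bound. -/
noncomputable def jangA (m : ℝ) : ℝ := 2 * √2 * m

/-- The constant `B = c̄² √m min{1, (1 - 1/(3√2)) / (8 m^{3/2})}` in the logarithmic bound. -/
noncomputable def jangB (m cbar : ℝ) : ℝ :=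
  cbar ^ 2 * √m * min 1 ((1 - 1 / (3 * √2)) / (8 * m ^ ((3 : ℝ) / 2)))

/-- The constant `δ = √(e m (c_crit² - c²))` in the logarithmic bound: `A s + δ` bounds the
Kruskal radius `r_c(s)`. -/
noncomputable def jangDelta (m c : ℝ) : ℝ := √(Real.exp 1 * m * (cCrit m ^ 2 - c ^ 2))

/-- The square root `S = √(2m (1 - h²) / φ_r(r) + h² / 4)` occurring in `F_c(s, h)`. -/
noncomputable def jangRoot (m r h : ℝ) : ℝ := √(2 * m * (1 - h ^ 2) / phiR m r + h ^ 2 / 4)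

section Bounds

variable {m c cbar s r h : ℝ}

lemma exp_mul_one_sub_le_one_sub_sq_half {x : ℝ} (hx : 0 ≤ x) :
    Real.exp x * (1 - x) ≤ 1 - x ^ 2 / 2 := by
  have hderiv (t : ℝ) : HasDerivAt (fun t ↦ 1 - t ^ 2 / 2 - Real.exp t * (1 - t))
      (t * (Real.exp t - 1)) t := by
    refine ((((hasDerivAt_pow 2 t).div_const 2).const_sub 1).fun_sub
      ((Real.hasDerivAt_exp t).fun_mul ((hasDerivAt_id' t).const_sub 1))).congr_deriv ?_
    ring
  have hnonneg (t : ℝ) : 0 ≤ t * (Real.exp t - 1) := by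
    rcases le_total 0 t with ht | ht
    · exact mul_nonneg ht (sub_nonneg.2 (Real.one_le_exp ht))
    · exact mul_nonneg_of_nonpos_of_nonpos ht (sub_nonpos.2 (Real.exp_le_one_iff.2 ht))
  have hmono := monotone_of_hasDerivAt_nonneg hderiv hnonneg hx
  norm_num at hmono
  linarith

lemma phi_nonpos_iff : phi m r ≤ 0 ↔ r ≤ 2 * m := by
  rw [phi, ← not_lt, mul_pos_iff_of_pos_left (Real.exp_pos _), sub_pos, not_lt]

lemma phiR_pos (hm : 0 < m) (hr : 0 < r) : 0 < phiR m r := by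
  unfold phiR
  positivity

lemma phiR_le_one (hm : 0 < m) (hr : r ≤ 2 * m) : phiR m r ≤ 1 := by
  have hx : r / (2 * m) ≤ 1 := (div_le_one (by positivity)).2 hr
  exact mul_le_one₀ hx (Real.exp_pos _).le (Real.exp_le_one_iff.2 (sub_nonpos.2 hx))

lemma sq_le_add_phi (hm : 0 < m) (hr : 0 ≤ r) :
    r ^ 2 ≤ 8 * m ^ 2 + 4 * Real.exp 1 * m * phi m r := by
  obtain ⟨x, rfl⟩ : ∃ x, r = 2 * m * x := ⟨r / (2 * m), by field_simp⟩
  have hx : 0 ≤ x := nonneg_of_mul_nonneg_right hr (by positivity)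
  have hphi : Real.exp 1 * phi m (2 * m * x) = -(2 * m * (Real.exp x * (1 - x))) := by
    rw [phi, mul_div_cancel_left₀ _ (by positivity), Real.exp_sub]
    field_simp
    ring
  calc (2 * m * x) ^ 2 = 8 * m ^ 2 - 8 * m ^ 2 * (1 - x ^ 2 / 2) := by ring
    _ ≤ 8 * m ^ 2 - 8 * m ^ 2 * (Real.exp x * (1 - x)) := by
      gcongr
      exact exp_mul_one_sub_le_one_sub_sq_half hx
    _ = 8 * m ^ 2 + 4 * m * (Real.exp 1 * phi m (2 * m * x)) := by rw [hphi]; ring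
    _ = _ := by ring

lemma jangA_pos (hm : 0 < m) : 0 < jangA m := by
  unfold jangA
  positivity

lemma jangA_sq : jangA m ^ 2 = 8 * m ^ 2 := by
  rw [jangA, mul_pow, mul_pow, Real.sq_sqrt zero_le_two]
  norm_num

lemma exp_one_mul_mul_cCrit_sq (hm : 0 ≤ m) : Real.exp 1 * m * cCrit m ^ 2 = 8 * m ^ 2 := by
  rw [cCrit, Real.sq_sqrt (by positivity)]
  field_simp

lemma jangDelta_pos (hm : 0 < m) (hc : |c| < cCrit m) : 0 < jangDelta m c :=
  Real.sqrt_pos.2 (mul_pos (by positivity) (sub_pos.2 (sq_lt_sq.2 (hc.trans_le (le_abs_self _)))))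

lemma radius_le_jangA_mul_add_jangDelta (hm : 0 < m) (hc : |c| ≤ cCrit m) (hs : 0 ≤ s)
    (hr : 0 ≤ r) (hphi : phi m r = c ^ 2 / 4 * (s ^ 2 - 1)) :
    r ≤ jangA m * s + jangDelta m c := by
  have hcsq : c ^ 2 ≤ cCrit m ^ 2 := sq_le_sq.2 (hc.trans (le_abs_self _))
  have hA := (jangA_pos hm).le
  have hδ : 0 ≤ jangDelta m c := Real.sqrt_nonneg _
  have hδsq : jangDelta m c ^ 2 = Real.exp 1 * m * (cCrit m ^ 2 - c ^ 2) :=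
    Real.sq_sqrt (mul_nonneg (by positivity) (sub_nonneg.2 hcsq))
  refine le_of_sq_le_sq ?_ (by positivity)
  calc r ^ 2 ≤ 8 * m ^ 2 + 4 * Real.exp 1 * m * phi m r := sq_le_add_phi hm hr
    _ = Real.exp 1 * m * c ^ 2 * s ^ 2 + jangDelta m c ^ 2 := by
      rw [hphi, hδsq, mul_sub (Real.exp 1 * m), exp_one_mul_mul_cCrit_sq hm.le]
      ring
    _ ≤ Real.exp 1 * m * cCrit m ^ 2 * s ^ 2 + jangDelta m c ^ 2 := by gcongr
    _ = (jangA m * s) ^ 2 + jangDelta m c ^ 2 := by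
      rw [exp_one_mul_mul_cCrit_sq hm.le, mul_pow, jangA_sq]
    _ ≤ (jangA m * s + jangDelta m c) ^ 2 := by
      rw [add_sq]
      linarith [show 0 ≤ 2 * (jangA m * s) * jangDelta m c by positivity]

lemma half_abs_le_jangRoot (hm : 0 < m) (hr : 0 < r) (hh : |h| ≤ 1) :
    |h| / 2 ≤ jangRoot m r h := by
  have hp := phiR_pos hm hr
  have ha : 0 ≤ 1 - h ^ 2 := sub_nonneg.2 ((sq_le_one_iff_abs_le_one h).2 hh)
  refine Real.le_sqrt_of_sq_le ?_
  rw [div_pow, sq_abs]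
  linarith [show 0 ≤ 2 * m * (1 - h ^ 2) / phiR m r by positivity]

lemma sqrt_mul_add_le_jangRoot (hm : 0 < m) (hr : 0 < r) (hr2 : r ≤ 2 * m) (hh : |h| ≤ 1) :
    √m * (1 - h ^ 2) + |h| / (2 * √2) ≤ jangRoot m r h := by
  have ha : 0 ≤ 1 - h ^ 2 := sub_nonneg.2 ((sq_le_one_iff_abs_le_one h).2 hh)
  have ha1 : (1 - h ^ 2) ^ 2 ≤ 1 - h ^ 2 :=
    pow_le_of_le_one ha (sub_le_self 1 (sq_nonneg h)) two_ne_zero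
  refine Real.le_sqrt_of_sq_le ?_
  calc (√m * (1 - h ^ 2) + |h| / (2 * √2)) ^ 2
      ≤ 2 * ((√m * (1 - h ^ 2)) ^ 2 + (|h| / (2 * √2)) ^ 2) := add_sq_le
    _ = 2 * m * (1 - h ^ 2) ^ 2 + h ^ 2 / 4 := by
      rw [mul_pow, div_pow, mul_pow, Real.sq_sqrt hm.le, Real.sq_sqrt zero_le_two, sq_abs]
      ring
    _ ≤ 2 * m * (1 - h ^ 2) + h ^ 2 / 4 := by gcongr
    _ ≤ 2 * m * (1 - h ^ 2) / phiR m r + h ^ 2 / 4 := by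
      gcongr
      exact le_div_self (by positivity) (phiR_pos hm hr) (phiR_le_one hm hr2)

lemma Fc_eq_sq_mul :
    Fc m c s r h = c ^ 2 *
      ((1 - h ^ 2) / phiR m r *
          (jangRoot m r h / 2 * (1 / (2 * m) - 3 / r) - s * h / 4 * (1 / (2 * m) + 5 / r))
        - h ^ 2 / (4 * m * r) * (jangRoot m r h + s * h / 2)) := by
  unfold Fc jangRoot
  ring

lemma Fc_first_bracket_le (hm : 0 < m) (hs : 0 ≤ s) (hs1 : s ≤ 1 / (3 * √2))
    (hr : 0 < r) (hr2 : r ≤ 2 * m) (hh : h ∈ Set.Icc (-1) 0) :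
    jangRoot m r h / 2 * (1 / (2 * m) - 3 / r) - s * h / 4 * (1 / (2 * m) + 5 / r)
      ≤ -(√m * (1 - h ^ 2) / r) := by
  have hS : √m * (1 - h ^ 2) + -h / (2 * √2) ≤ jangRoot m r h := by
    simpa only [abs_of_nonpos hh.2] using
      sqrt_mul_add_le_jangRoot hm hr hr2 (abs_le.2 ⟨hh.1, hh.2.trans zero_le_one⟩)
  have hS0 : 0 ≤ jangRoot m r h := Real.sqrt_nonneg _
  have hsh : 0 ≤ s * -h := mul_nonneg hs (neg_nonneg.2 hh.2)
  have habsorb : 3 / 2 * (s * -h) ≤ -h / (2 * √2) :=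
    calc 3 / 2 * (s * -h) ≤ 3 / 2 * (1 / (3 * √2) * -h) := by
          gcongr
          exact neg_nonneg.2 hh.2
      _ = -h / (2 * √2) := by field_simp
  calc jangRoot m r h / 2 * (1 / (2 * m) - 3 / r) - s * h / 4 * (1 / (2 * m) + 5 / r)
      = (jangRoot m r h / 2 + s * -h / 4) * (1 / (2 * m))
          - (3 / 2 * jangRoot m r h - 5 / 4 * (s * -h)) / r := by ring
    _ ≤ (jangRoot m r h / 2 + s * -h / 4) * (1 / r)
          - (3 / 2 * jangRoot m r h - 5 / 4 * (s * -h)) / r := by gcongr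
    _ = -((jangRoot m r h - 3 / 2 * (s * -h)) / r) := by ring
    _ ≤ -(√m * (1 - h ^ 2) / r) := by
      gcongr
      linarith

lemma Fc_le_neg_sq_mul_div (c : ℝ) (hm : 0 < m) (hs : 0 ≤ s) (hs1 : s ≤ 1 / (3 * √2))
    (hr : 0 < r) (hr2 : r ≤ 2 * m) (hh : h ∈ Set.Icc (-1) 0) :
    Fc m c s r h ≤ -(c ^ 2 * (√m * (1 - h ^ 2) ^ 2 + (1 - s) / (8 * m) * -h ^ 3) / r) := by
  have habs : |h| ≤ 1 := abs_le.2 ⟨hh.1, hh.2.trans zero_le_one⟩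
  have ha : 0 ≤ 1 - h ^ 2 := sub_nonneg.2 ((sq_le_one_iff_abs_le_one h).2 habs)
  have hp := phiR_pos hm hr
  have hS : -h / 2 ≤ jangRoot m r h := by
    simpa only [abs_of_nonpos hh.2] using half_abs_le_jangRoot hm hr habs
  have hfirst : (1 - h ^ 2) / phiR m r *
        (jangRoot m r h / 2 * (1 / (2 * m) - 3 / r) - s * h / 4 * (1 / (2 * m) + 5 / r))
      ≤ -(√m * (1 - h ^ 2) ^ 2 / r) :=
    calc _ ≤ (1 - h ^ 2) / phiR m r * -(√m * (1 - h ^ 2) / r) := by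
          gcongr
          exact Fc_first_bracket_le hm hs hs1 hr hr2 hh
      _ = -(√m * (1 - h ^ 2) ^ 2 / r / phiR m r) := by ring
      _ ≤ -(√m * (1 - h ^ 2) ^ 2 / r) :=
        neg_le_neg (le_div_self (by positivity) hp (phiR_le_one hm hr2))
  have hsecond : (1 - s) / (8 * m) * -h ^ 3 / r
      ≤ h ^ 2 / (4 * m * r) * (jangRoot m r h + s * h / 2) :=
    calc (1 - s) / (8 * m) * -h ^ 3 / r = h ^ 2 / (4 * m * r) * (-h / 2 + s * h / 2) := by
          field_simp
          ring
      _ ≤ _ := by gcongr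
  calc Fc m c s r h
      ≤ c ^ 2 * (-(√m * (1 - h ^ 2) ^ 2 / r) - (1 - s) / (8 * m) * -h ^ 3 / r) := by
        rw [Fc_eq_sq_mul]
        gcongr
    _ = _ := by ring

lemma one_div_three_mul_sqrt_two_le_one : 1 / (3 * √2) ≤ 1 := by
  rw [div_le_one (by positivity)]
  linarith [Real.one_le_sqrt.2 one_le_two]

lemma jangB_nonneg (hm : 0 ≤ m) : 0 ≤ jangB m cbar := by
  have := sub_nonneg.2 one_div_three_mul_sqrt_two_le_one
  unfold jangB
  positivity

lemma jangB_le_sq_mul_sqrt : jangB m cbar ≤ cbar ^ 2 * √m :=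
  mul_le_of_le_one_right (by positivity) (min_le_left _ _)

lemma jangB_le_sq_mul_div (hm : 0 < m) :
    jangB m cbar ≤ cbar ^ 2 * ((1 - 1 / (3 * √2)) / (8 * m)) := by
  have hrpow : m ^ ((3 : ℝ) / 2) = m * √m := by
    rw [Real.sqrt_eq_rpow, ← Real.rpow_one_add' hm.le (by norm_num)]
    norm_num
  have hsqrt : √m ≠ 0 := (Real.sqrt_pos.2 hm).ne'
  calc jangB m cbar
      ≤ cbar ^ 2 * √m * ((1 - 1 / (3 * √2)) / (8 * m ^ ((3 : ℝ) / 2))) :=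
        mul_le_mul_of_nonneg_left (min_le_right _ _) (by positivity)
    _ = cbar ^ 2 * ((1 - 1 / (3 * √2)) / (8 * m)) := by
      rw [hrpow]
      field_simp

lemma jangB_mul_le {C : ℝ} (hm : 0 < m) (hcbar : |cbar| ≤ |c|) (hs1 : s ≤ 1 / (3 * √2))
    (hh : h ≤ 0) (hC : C ≤ (1 - h ^ 2) ^ 2 - h ^ 3) :
    jangB m cbar * C ≤ c ^ 2 * (√m * (1 - h ^ 2) ^ 2 + (1 - s) / (8 * m) * -h ^ 3) := by
  have hcub : 0 ≤ -h ^ 3 := neg_nonneg.2 (Odd.pow_nonpos (by decide) hh)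
  have hs : 0 ≤ 1 - s := sub_nonneg.2 (hs1.trans one_div_three_mul_sqrt_two_le_one)
  calc jangB m cbar * C
      ≤ jangB m cbar * ((1 - h ^ 2) ^ 2 - h ^ 3) :=
        mul_le_mul_of_nonneg_left hC (jangB_nonneg hm.le)
    _ = jangB m cbar * (1 - h ^ 2) ^ 2 + jangB m cbar * -h ^ 3 := by ring
    _ ≤ cbar ^ 2 * √m * (1 - h ^ 2) ^ 2 + cbar ^ 2 * ((1 - s) / (8 * m)) * -h ^ 3 := by
      gcongr
      · exact jangB_le_sq_mul_sqrt
      · exact (jangB_le_sq_mul_div hm).trans (by gcongr)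
    _ = cbar ^ 2 * (√m * (1 - h ^ 2) ^ 2 + (1 - s) / (8 * m) * -h ^ 3) := by ring
    _ ≤ _ := mul_le_mul_of_nonneg_right (sq_le_sq.2 hcbar) (by positivity)

lemma Fc_le_neg_jangB_mul_div {C : ℝ} (hm : 0 < m) (hc : |c| < cCrit m) (hcbar : |cbar| ≤ |c|)
    (hs : 0 ≤ s) (hs1 : s ≤ 1 / (3 * √2)) (hr : 0 < r)
    (hphi : phi m r = c ^ 2 / 4 * (s ^ 2 - 1)) (hh : h ∈ Set.Icc (-1) 0)
    (hC : C ≤ (1 - h ^ 2) ^ 2 - h ^ 3) :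
    Fc m c s r h ≤ -(jangB m cbar * C / (jangA m * s + jangDelta m c)) := by
  have hs_one : s ≤ 1 := hs1.trans one_div_three_mul_sqrt_two_le_one
  have hr2 : r ≤ 2 * m := phi_nonpos_iff.1 <| hphi.trans_le <|
    mul_nonpos_of_nonneg_of_nonpos (by positivity) (sub_nonpos.2 (pow_le_one₀ hs hs_one))
  have hcub : 0 ≤ -h ^ 3 := neg_nonneg.2 (Odd.pow_nonpos (by decide) hh.2)
  have := sub_nonneg.2 hs_one
  exact (Fc_le_neg_sq_mul_div c hm hs hs1 hr hr2 hh).trans <| neg_le_neg <|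
    div_le_div₀ (by positivity) (jangB_mul_le hm hcbar hs1 hh.2 hC) hr
      (radius_le_jangA_mul_add_jangDelta hm hc.le hs hr.le hphi)

end Bounds

section Comparison

variable {A δ K : ℝ}

lemma hasDerivAt_const_mul_log_div {s : ℝ} (hA : A ≠ 0) (hδ : δ ≠ 0) (hs : A * s + δ ≠ 0) :
    HasDerivAt (fun t ↦ K / A * Real.log (δ / (A * t + δ))) (-(K / (A * s + δ))) s := by
  have hlin : HasDerivAt (fun t ↦ A * t + δ) A s := by
    simpa using ((hasDerivAt_id s).const_mul A).add_const δ
  refine ((((hasDerivAt_const s δ).fun_div hlin hs).log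
    (div_ne_zero hδ hs)).const_mul (K / A)).congr_deriv ?_
  field_simp
  ring

lemma le_mul_log_div_of_deriv_le {f f' : ℝ → ℝ} {T : ℝ} (hA : 0 < A) (hδ : 0 < δ)
    (hf : ∀ s ∈ Set.Icc 0 T, HasDerivWithinAt f (f' s) (Set.Icc 0 T) s)
    (hf' : ∀ s ∈ Set.Icc 0 T, f' s ≤ -(K / (A * s + δ))) (hf0 : f 0 ≤ 0) :
    ∀ s ∈ Set.Icc 0 T, f s ≤ K / A * Real.log (δ / (A * s + δ)) := by
  have hbarrier (s : ℝ) (hs : 0 ≤ s) := hasDerivAt_const_mul_log_div (K := K) hA.ne' hδ.ne'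
    (by positivity : A * s + δ ≠ 0)
  refine image_le_of_deriv_right_le_deriv_boundary (fun s hs ↦ (hf s hs).continuousWithinAt)
    (fun s hs ↦ ?_) (by simpa [hδ.ne'] using hf0)
    (fun s hs ↦ (hbarrier s hs.1).continuousAt.continuousWithinAt)
    (fun s hs ↦ (hbarrier s hs.1).hasDerivWithinAt)
    (fun s hs ↦ hf' s (Set.Ico_subset_Icc_self hs))
  exact (hf s (Set.Ico_subset_Icc_self hs)).mono_of_mem_nhdsWithin
    (Filter.mem_of_superset (Icc_mem_nhdsGE hs.2) (Set.Icc_subset_Icc_left hs.1))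

end Comparison

theorem h_logarithmic_bound_general {m c cbar s₁ C : ℝ} (hm : 0 < m) (hc : |c| < cCrit m)
    (hcbar : |cbar| ≤ |c|) (hC : ∀ x ∈ Set.Icc (-1 : ℝ) 0, C ≤ (1 - x ^ 2) ^ 2 - x ^ 3)
    (hs₁ : s₁ ≤ 1 / (3 * √2)) {Rc h : ℝ → ℝ}
    (hRc : ∀ s ∈ Set.Icc 0 s₁, 0 < Rc s ∧ phi m (Rc s) = c ^ 2 / 4 * (s ^ 2 - 1))
    (hrange : ∀ s ∈ Set.Icc 0 s₁, h s ∈ Set.Icc (-1) 0)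
    (hsol : ∀ s ∈ Set.Icc 0 s₁,
      HasDerivWithinAt h (Fc m c s (Rc s) (h s)) (Set.Icc 0 s₁) s) :
    ∀ s ∈ Set.Icc 0 s₁, h s ≤ jangB m cbar * C / jangA m *
      Real.log (jangDelta m c / (jangA m * s + jangDelta m c)) := by
  intro s hs
  have hh0 : h 0 ≤ 0 := (hrange 0 ⟨le_rfl, hs.1.trans hs.2⟩).2
  refine le_mul_log_div_of_deriv_le (jangA_pos hm) (jangDelta_pos hm hc) hsol
    (fun t ht ↦ ?_) hh0 s hs
  exact Fc_le_neg_jangB_mul_div hm hc hcbar ht.1 (ht.2.trans hs₁) (hRc t ht).1 (hRc t ht).2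
    (hrange t ht) (hC _ (hrange t ht))

/-- Logarithmic upper bound for solutions of the transformed Jang equation
on `[0, s₁] ⊆ [0, 1/(3√2)]`: `h(s) ≤ (BC/A)·log(δ/(As + δ))`. -/
theorem h_logarithmic_bound (m c cbar s₁ C : ℝ) (hm : 0 < m)
    (hc : c ∈ Set.Ioo 0 (cCrit m)) (hcbar : cbar ∈ Set.Ioc 0 c)
    (hC : 0 < C) (hCbound : ∀ x ∈ Set.Icc (-1:ℝ) 0, C ≤ (1 - x^2)^2 - x^3)
    (hs₁0 : 0 ≤ s₁) (hs₁ : s₁ ≤ 1/(3*Real.sqrt 2))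
    (Rc : ℝ → ℝ)
    (hRc : ∀ s, 0 < Rc s ∧ phi m (Rc s) = c^2/4 * (s^2 - 1))
    (h : ℝ → ℝ)
    (hrange : ∀ s ∈ Set.Icc (0:ℝ) s₁, h s ∈ Set.Icc (-1:ℝ) 0)
    (hsol : ∀ s ∈ Set.Icc (0:ℝ) s₁,
      HasDerivWithinAt h (Fc m c s (Rc s) (h s)) (Set.Icc (0:ℝ) s₁) s)
    (hinit : h 0 = 0) :
    ∀ s ∈ Set.Icc (0:ℝ) s₁,
      h s ≤ ((cbar^2 * Real.sqrt m *
              min 1 ((1 - 1/(3*Real.sqrt 2)) / (8 * m^((3:ℝ)/2)))) * C /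
            (2 * Real.sqrt 2 * m)) *
          Real.log (Real.sqrt (Real.exp 1 * m * ((cCrit m)^2 - c^2)) /
            (2 * Real.sqrt 2 * m * s +
              Real.sqrt (Real.exp 1 * m * ((cCrit m)^2 - c^2)))) := by
  exact h_logarithmic_bound_general hm ((abs_of_pos hc.1).trans_lt hc.2)
    (abs_le_abs_of_nonneg hcbar.1.le hcbar.2) hCbound hs₁ (fun s _ ↦ hRc s) hrange hsol
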